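/- If κ carries a normal fine κ-complete ultrafilter on P_κ(κ⁺) (i.e., κ is κ⁺-supercompact) and the set of strongly compact cardinals below κ is unbounded in κ, then κ is strongly compact. -/

import Mathlib

/-!
The ultrafilter `U` on `P_κ(κ⁺)` is used only through its `κ`-completeness and fineness.

* `succ_lt_of_fine`: `κ` is a limit cardinal. If `κ ≤ 2 ^ c` with `c < κ`, code ordinals below `κ`
  by subsets of `c`; by completeness `U` decides all bits of the code of the least ordinal missing
  from `s`, so that this ordinal is constant on a set in `U`, against fineness.
* Completeness and fineness give `γ ⊆ s`, hence `|γ| ≤ |s|`, for `U`-almost all `s`, for each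
  `γ < κ`. Given `lam ≥ κ`, choose for each `s ∈ P_κ(κ⁺)` a strongly compact `μ s` with
  `|s| ≤ μ s < κ`, and a `μ s`-complete fine ultrafilter `ν s` on `P_{μ s}(lam)`. The `U`-limit of
  the `ν s` is a fine ultrafilter on `P_κ(lam)`; it is `κ`-complete because every cardinal below
  `κ` lies below `μ s` for `U`-almost all `s`.
-/

open Cardinal Set

/-- `P_κ(λ)`: the collection of all sets of ordinals below `λ` of cardinality less than `κ`. -/
def smallSubsets (κ lam : Cardinal.{0}) : Set (Set Ordinal.{0}) :=
  {s | (∀ α ∈ s, α < lam.ord) ∧ #s < Cardinal.lift.{1} κ}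

/-- `U` is an ultrafilter on the set `A`. -/
structure IsUltrafilterOn {α : Type*} (A : Set α) (U : Set (Set α)) : Prop where
  sets_subset : ∀ Y ∈ U, Y ⊆ A
  base_mem : A ∈ U
  empty_not_mem : ∅ ∉ U
  superset_mem : ∀ Y ∈ U, ∀ Z ⊆ A, Y ⊆ Z → Z ∈ U
  inter_mem : ∀ Y ∈ U, ∀ Z ∈ U, Y ∩ Z ∈ U
  mem_or_compl_mem : ∀ Y ⊆ A, Y ∈ U ∨ A \ Y ∈ U

/-- `U` is `κ`-complete: the intersection of fewer than `κ` members of `U` is in `U`. -/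
def IsKappaComplete {α : Type 1} (κ : Cardinal.{0}) (A : Set α) (U : Set (Set α)) : Prop :=
  ∀ F : Set (Set α), F ⊆ U → #F < Cardinal.lift.{1} κ → A ∩ ⋂₀ F ∈ U

/-- `U` is a fine (ultra)filter on `P_κ(λ)`. -/
def IsFine (κ lam : Cardinal.{0}) (U : Set (Set (Set Ordinal.{0}))) : Prop :=
  ∀ α < lam.ord, {s ∈ smallSubsets κ lam | α ∈ s} ∈ U

/-- `κ` is `λ`-strongly compact: there is a `κ`-complete fine ultrafilter on `P_κ(λ)`. -/
def IsStronglyCompactIn (κ lam : Cardinal.{0}) : Prop :=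
  ∃ U : Set (Set (Set Ordinal.{0})), IsUltrafilterOn (smallSubsets κ lam) U ∧
    IsKappaComplete κ (smallSubsets κ lam) U ∧ IsFine κ lam U

/-- `κ` is strongly compact: `λ`-strongly compact for every cardinal `λ ≥ κ`. -/
def IsStronglyCompactCard (κ : Cardinal.{0}) : Prop :=
  ∀ lam, κ ≤ lam → IsStronglyCompactIn κ lam

/-- `κ` is measurable: uncountable, with a `κ`-complete nonprincipal ultrafilter on `κ`
(identified with the set of ordinals below `κ`). -/
def IsMeasurableCard (κ : Cardinal.{0}) : Prop :=
  ℵ₀ < κ ∧ ∃ U : Set (Set Ordinal.{0}), IsUltrafilterOn (Set.Iio κ.ord) U ∧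
    IsKappaComplete κ (Set.Iio κ.ord) U ∧ ∀ γ : Ordinal.{0}, {γ} ∉ U

/-- `U` is a normal (ultra)filter on `P_κ(λ)`: it is closed under diagonal intersections
of `λ`-indexed families of its members. -/
def IsNormalOn (κ lam : Cardinal.{0}) (U : Set (Set (Set Ordinal.{0}))) : Prop :=
  ∀ A : Ordinal.{0} → Set (Set Ordinal.{0}), (∀ α < lam.ord, A α ∈ U) →
    {s ∈ smallSubsets κ lam | ∀ α ∈ s, s ∈ A α} ∈ U

/-- `κ` is `λ`-supercompact: there is a normal fine `κ`-complete ultrafilter on `P_κ(λ)`. -/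
def IsSupercompactIn (κ lam : Cardinal.{0}) : Prop :=
  ∃ U : Set (Set (Set Ordinal.{0})), IsUltrafilterOn (smallSubsets κ lam) U ∧
    IsKappaComplete κ (smallSubsets κ lam) U ∧ IsFine κ lam U ∧ IsNormalOn κ lam U

/-- Indexed form of `κ`-completeness. -/
lemma IsKappaComplete.forall_mem {α β : Type 1} {κ : Cardinal.{0}} {A : Set α} {U : Set (Set α)}
    (hc : IsKappaComplete κ A U) (I : Set β) (f : β → Set α) (hf : ∀ i ∈ I, f i ∈ U)
    (hI : #I < Cardinal.lift.{1} κ) : {x ∈ A | ∀ i ∈ I, x ∈ f i} ∈ U := by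
  have h := hc (f '' I) (by rintro _ ⟨i, hi, rfl⟩; exact hf i hi) (mk_image_le.trans_lt hI)
  have e : {x ∈ A | ∀ i ∈ I, x ∈ f i} = A ∩ ⋂₀ (f '' I) := by
    ext x; simp
  rwa [e]

lemma smallSubsets_mono {μ κ lam : Cardinal.{0}} (h : μ ≤ κ) :
    smallSubsets μ lam ⊆ smallSubsets κ lam :=
  fun _ hs => ⟨hs.1, hs.2.trans_le (Cardinal.lift_le.2 h)⟩

/-- A cardinal carrying a `κ`-complete fine ultrafilter on some `P_κ(lam)`, `κ ≤ lam`, is not a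
successor, since it is even a strong limit. -/
lemma succ_lt_of_fine {κ lam : Cardinal.{0}} (hlam : κ ≤ lam) {U : Set (Set (Set Ordinal.{0}))}
    (hU : IsUltrafilterOn (smallSubsets κ lam) U) (hc : IsKappaComplete κ (smallSubsets κ lam) U)
    (hfine : IsFine κ lam U) {c : Cardinal.{0}} (hcκ : c < κ) : Order.succ c < κ := by
  by_contra hcon
  have h2 : κ ≤ 2 ^ c := (not_lt.1 hcon).trans (Order.succ_le_of_lt (cantor c))
  have hcard : #(Iio κ.ord) ≤ #(Set (Iio c.ord)) := by
    rw [mk_set, mk_Iio_ordinal, mk_Iio_ordinal, card_ord, card_ord]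
    simpa using Cardinal.lift_le.{1}.2 h2
  obtain ⟨f⟩ := hcard
  -- the least ordinal missing from `s`
  let g : Set Ordinal.{0} → Ordinal.{0} := fun s => sInf sᶜ
  have hex : ∀ s ∈ smallSubsets κ lam, ∃ α < κ.ord, α ∉ s := by
    intro s hs
    by_contra! h
    have h1 : #(Iio κ.ord) ≤ #s := mk_le_mk_of_subset h
    rw [mk_Iio_ordinal, card_ord] at h1
    exact absurd hs.2 (not_lt.2 h1)
  have hg1 : ∀ s ∈ smallSubsets κ lam, g s ∉ s := fun s hs => by
    obtain ⟨α, -, h⟩ := hex s hs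
    exact csInf_mem (s := sᶜ) ⟨α, h⟩
  have hg2 : ∀ s ∈ smallSubsets κ lam, g s < κ.ord := fun s hs => by
    obtain ⟨α, hα, h⟩ := hex s hs
    exact (csInf_le' (s := sᶜ) h).trans_lt hα
  -- `C i` is the set of `s` whose code contains `i`, and `B i ∈ U` is a set on which
  -- membership in `C i` is constant
  let C : Iio c.ord → Set (Set Ordinal.{0}) := fun i =>
    {s | ∃ h : s ∈ smallSubsets κ lam, i ∈ f ⟨g s, hg2 s h⟩}
  have hC : ∀ i, ∃ B ∈ U, ∀ s ∈ B, ∀ t ∈ B, (s ∈ C i ↔ t ∈ C i) := by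
    intro i
    rcases hU.mem_or_compl_mem (C i) (fun s hs => hs.1) with h | h
    · exact ⟨_, h, fun s hs t ht => iff_of_true hs ht⟩
    · exact ⟨_, h, fun s hs t ht => iff_of_false hs.2 ht.2⟩
  choose B hBU hB using hC
  have hall : {s ∈ smallSubsets κ lam | ∀ i ∈ (univ : Set (Iio c.ord)), s ∈ B i} ∈ U := by
    refine hc.forall_mem _ _ (fun i _ => hBU i) ?_
    rw [mk_univ, mk_Iio_ordinal, card_ord]
    exact Cardinal.lift_lt.2 hcκ
  have hconst : ∀ s ∈ {s ∈ smallSubsets κ lam | ∀ i ∈ (univ : Set (Iio c.ord)), s ∈ B i},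
      ∀ t ∈ {s ∈ smallSubsets κ lam | ∀ i ∈ (univ : Set (Iio c.ord)), s ∈ B i}, g s = g t := by
    rintro s ⟨hs, hsB⟩ t ⟨ht, htB⟩
    have : f ⟨g s, hg2 s hs⟩ = f ⟨g t, hg2 t ht⟩ := by
      ext i
      have := hB i s (hsB i trivial) t (htB i trivial)
      simpa [C, hs, ht] using this
    exact congrArg Subtype.val (f.injective this)
  obtain ⟨s, hs⟩ : {s ∈ smallSubsets κ lam |
      ∀ i ∈ (univ : Set (Iio c.ord)), s ∈ B i}.Nonempty := by
    rw [nonempty_iff_ne_empty]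
    intro h
    exact hU.empty_not_mem (h ▸ hall)
  have hfin := hfine (g s) ((hg2 s hs.1).trans_le (ord_le_ord.2 hlam))
  obtain ⟨t, ht⟩ : ({s ∈ smallSubsets κ lam | ∀ i ∈ (univ : Set (Iio c.ord)), s ∈ B i} ∩
      {t ∈ smallSubsets κ lam | g s ∈ t}).Nonempty := by
    rw [nonempty_iff_ne_empty]
    intro h
    exact hU.empty_not_mem (h ▸ hU.inter_mem _ hall _ hfin)
  exact hg1 t ht.2.1 (hconst s hs t ht.1 ▸ ht.2.2)

/-- Almost all `s ∈ P_κ(lam)` have cardinality at least `c`, for each `c < κ`. -/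
lemma large_mem_of_fine {κ lam : Cardinal.{0}} (hlam : κ ≤ lam) {U : Set (Set (Set Ordinal.{0}))}
    (hU : IsUltrafilterOn (smallSubsets κ lam) U) (hc : IsKappaComplete κ (smallSubsets κ lam) U)
    (hfine : IsFine κ lam U) {c : Cardinal.{0}} (hcκ : c < κ) :
    {s ∈ smallSubsets κ lam | Cardinal.lift.{1} c ≤ #s} ∈ U := by
  have h := hc.forall_mem (Iio c.ord) (fun α => {s ∈ smallSubsets κ lam | α ∈ s})
    (fun α hα => hfine α (lt_of_lt_of_le hα (ord_le_ord.2 (hcκ.le.trans hlam))))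
    (by rw [mk_Iio_ordinal, card_ord]; exact Cardinal.lift_lt.2 hcκ)
  refine hU.superset_mem _ h _ (fun s hs => hs.1) ?_
  rintro s ⟨hs, hs'⟩
  refine ⟨hs, ?_⟩
  have h1 : #(Iio c.ord) ≤ #s := mk_le_mk_of_subset fun α hα => (hs' α hα).2
  rwa [mk_Iio_ordinal, card_ord] at h1

/-- If `κ` is `κ⁺`-supercompact and the strongly compact cardinals below `κ` are
unbounded in `κ`, then `κ` is strongly compact. -/
theorem stronglyCompact_of_succ_supercompact_limit (κ : Cardinal.{0})
    (hsc : IsSupercompactIn κ (Order.succ κ))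
    (hub : ∀ β < κ, ∃ μ : Cardinal.{0}, β ≤ μ ∧ μ < κ ∧ IsStronglyCompactCard μ) :
    IsStronglyCompactCard κ := by
  intro lam hlam
  obtain ⟨U, hU, hc, hfine, -⟩ := hsc
  have hsucc : κ ≤ Order.succ κ := Order.le_succ κ
  have hchoice : ∀ s : Set Ordinal.{0}, ∃ (μ : Cardinal.{0}) (V : Set (Set (Set Ordinal.{0}))),
      s ∈ smallSubsets κ (Order.succ κ) → #s ≤ Cardinal.lift.{1} μ ∧ μ < κ ∧
        IsUltrafilterOn (smallSubsets μ lam) V ∧ IsKappaComplete μ (smallSubsets μ lam) V ∧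
        IsFine μ lam V := by
    intro s
    by_cases hs : s ∈ smallSubsets κ (Order.succ κ)
    · obtain ⟨b, hb⟩ := Cardinal.mem_range_lift_of_le hs.2.le
      obtain ⟨μ, h1, h2, h3⟩ := hub b (Cardinal.lift_lt.1 (hb ▸ hs.2))
      obtain ⟨V, hV⟩ := h3 lam (h2.le.trans hlam)
      exact ⟨μ, V, fun _ => ⟨hb ▸ Cardinal.lift_le.2 h1, h2, hV⟩⟩
    · exact ⟨0, ∅, fun h => absurd h hs⟩
  choose μ ν hμν using hchoice
  -- `T A` is the set of `s` for which the trace of `A` on `P_{μ s}(lam)` has `ν s`-measure one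
  let T : Set (Set Ordinal.{0}) → Set (Set Ordinal.{0}) := fun A =>
    {s ∈ smallSubsets κ (Order.succ κ) | A ∩ smallSubsets (μ s) lam ∈ ν s}
  have hTsub : ∀ A, T A ⊆ smallSubsets κ (Order.succ κ) := fun A s hs => hs.1
  have hbase : T (smallSubsets κ lam) = smallSubsets κ (Order.succ κ) := by
    refine (hTsub _).antisymm fun s hs => ⟨hs, ?_⟩
    obtain ⟨-, h2, h3, -, -⟩ := hμν s hs
    rw [inter_eq_self_of_subset_right (smallSubsets_mono h2.le)]
    exact h3.base_mem
  refine ⟨{A | A ⊆ smallSubsets κ lam ∧ T A ∈ U}, ⟨?_, ?_, ?_, ?_, ?_, ?_⟩, ?_, ?_⟩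
  · exact fun Y hY => hY.1
  · exact ⟨Subset.rfl, hbase ▸ hU.base_mem⟩
  · rintro ⟨-, h⟩
    have : T ∅ = ∅ := by
      refine eq_empty_of_forall_notMem fun s hs => ?_
      have h2 := hs.2
      rw [empty_inter] at h2
      exact (hμν s hs.1).2.2.1.empty_not_mem h2
    exact hU.empty_not_mem (this ▸ h)
  · rintro Y ⟨-, hY⟩ Z hZ hYZ
    refine ⟨hZ, hU.superset_mem _ hY _ (hTsub _) fun s hs => ⟨hs.1, ?_⟩⟩
    exact (hμν s hs.1).2.2.1.superset_mem _ hs.2 _ inter_subset_right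
      (inter_subset_inter_left _ hYZ)
  · rintro Y ⟨hY, hY'⟩ Z ⟨-, hZ'⟩
    refine ⟨inter_subset_left.trans hY,
      hU.superset_mem _ (hU.inter_mem _ hY' _ hZ') _ (hTsub _) fun s hs => ⟨hs.1.1, ?_⟩⟩
    have := (hμν s hs.1.1).2.2.1.inter_mem _ hs.1.2 _ hs.2.2
    rwa [← inter_inter_distrib_right] at this
  · intro Y hY
    refine (hU.mem_or_compl_mem (T Y) (hTsub _)).imp (fun h => ⟨hY, h⟩) fun h => ⟨sdiff_subset, ?_⟩
    refine hU.superset_mem _ h _ (hTsub _) fun s hs => ⟨hs.1, ?_⟩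
    obtain ⟨-, h2, h3, -, -⟩ := hμν s hs.1
    rcases h3.mem_or_compl_mem (Y ∩ smallSubsets (μ s) lam) inter_subset_right with h4 | h4
    · exact absurd ⟨hs.1, h4⟩ hs.2
    · refine h3.superset_mem _ h4 _ inter_subset_right ?_
      rintro x ⟨hx, hx'⟩
      exact ⟨⟨smallSubsets_mono h2.le hx, fun hxY => hx' ⟨hxY, hx⟩⟩, hx⟩
  · intro F hF hFκ
    refine ⟨inter_subset_left, ?_⟩
    obtain ⟨c, hcF⟩ := Cardinal.mem_range_lift_of_le hFκ.le
    have hcκ : c < κ := Cardinal.lift_lt.1 (hcF ▸ hFκ)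
    have hlarge := large_mem_of_fine hsucc hU hc hfine (succ_lt_of_fine hsucc hU hc hfine hcκ)
    have hall := hc.forall_mem F T (fun A hA => (hF hA).2) hFκ
    refine hU.superset_mem _ (hU.inter_mem _ hlarge _ hall) _ (hTsub _) ?_
    rintro s ⟨⟨hs, hs1⟩, -, hs2⟩
    refine ⟨hs, ?_⟩
    obtain ⟨h1, h2, h3, h4, -⟩ := hμν s hs
    have hFμ : #F < Cardinal.lift.{1} (μ s) :=
      hcF ▸ (Cardinal.lift_lt.2 (Order.lt_succ c)).trans_le (hs1.trans h1)
    refine h3.superset_mem _ (h4.forall_mem F (fun A => A ∩ smallSubsets (μ s) lam)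
      (fun A hA => (hs2 A hA).2) hFμ) _ inter_subset_right ?_
    rintro x ⟨hx, hx'⟩
    exact ⟨⟨smallSubsets_mono h2.le hx, fun A hA => (hx' A hA).1⟩, hx⟩
  · intro α hα
    refine ⟨fun s hs => hs.1, hU.superset_mem _ hU.base_mem _ (hTsub _) fun s hs => ⟨hs, ?_⟩⟩
    obtain ⟨-, h2, h3, -, h5⟩ := hμν s hs
    refine h3.superset_mem _ (h5 α hα) _ inter_subset_right ?_
    rintro x ⟨hx, hx'⟩
    exact ⟨⟨smallSubsets_mono h2.le hx, hx'⟩, hx⟩
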